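/- arXiv:1403.5251 — 3 statements merged into one kernel-verified Lean document; each statement's English description precedes it below -/
import Mathlib

section
/- Fix an integer n ≥ 1 and let B(q) be the n×n matrix over ℚ(q) with diagonal entries B(q)_{ii} = [2]_q, entries B(q)_{ij} = −1 whenever |i−j| = 1, and 0 otherwise (the symmetrized q-Cartan matrix of type A_n). Then B(q) is invertible and for all 1 ≤ i, j ≤ n one has (B(q)^{−1})_{ij} = [min(i,j)]_q · [n+1−max(i,j)]_q / [n+1]_q. In particular every entry of [n+1]_q · B(q)^{−1} lies in ℕ[q,q^{−1}]. -/
/-!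
Write `N = n + 1` and extend the claimed inverse, multiplied by `[N]_q`, to all `0 ≤ a, b ≤ N` by
`g a b = [min a b]_q [N - max a b]_q`. It vanishes for `a = 0` and for `a = N`, so the product of
row `a` of `B` with column `b` of `g` is `[2] g(a,b) - g(a-1,b) - g(a+1,b)` without boundary cases
(`sum_tridiag`). For `a ≠ b` this is zero by the three-term recurrence `[2][m+1] = [m] + [m+2]`;
for `a = b` it is `[N]` by `[a+1][c+1] - [a][c] = [a+c+1]` (`cartan_mul_green`). All identities of
quantum numbers follow from `[m] (q - q⁻¹) = q^m - q^{-m}`. Since `[N] ≠ 0`, the matrix `g / [N]`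
is the inverse of `B`. Positivity holds because a product of quantum numbers expands as a sum of
powers of `q`.
-/

/-- The variable `q`, as an element of the field `ℚ(q)` of rational functions. -/
noncomputable def qq : RatFunc ℚ := RatFunc.X

/-- The quantum number `[m]_q = (q^m − q^{−m})/(q − q^{−1}) = Σ_{i=0}^{m−1} q^{m−1−2i}`. -/
noncomputable def qNum (m : ℕ) : RatFunc ℚ :=
  ∑ i ∈ Finset.range m, qq ^ ((m : ℤ) - 1 - 2 * (i : ℤ))

/-- `⟨m⟩_q = q^m + q^{−m}`. -/
noncomputable def qWh (m : ℕ) : RatFunc ℚ := qq ^ (m : ℤ) + qq ^ (-(m : ℤ))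

/-- `[m]_{q²} = [2m]_q/[2]_q`. -/
noncomputable def qNum2 (m : ℕ) : RatFunc ℚ := qNum (2 * m) / qNum 2

/-- An element of `ℚ(q)` lies in `ℕ[q,q^{−1}]` if it is a Laurent polynomial in `q`
with nonnegative integer coefficients. -/
def IsNatLaurent (f : RatFunc ℚ) : Prop :=
  ∃ c : ℤ →₀ ℕ, f = c.sum fun k n => (n : RatFunc ℚ) * qq ^ k

lemma qq_ne_zero : qq ≠ 0 := RatFunc.X_ne_zero

lemma qq_pow_ne_one {m : ℕ} (hm : m ≠ 0) : qq ^ m ≠ 1 := by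
  intro h
  have h1 : algebraMap (Polynomial ℚ) (RatFunc ℚ) (Polynomial.X ^ m)
      = algebraMap (Polynomial ℚ) (RatFunc ℚ) 1 := by
    rw [map_pow, map_one, RatFunc.algebraMap_X]
    exact h
  have h2 := congrArg Polynomial.natDegree (RatFunc.algebraMap_injective ℚ h1)
  simp at h2
  exact hm h2

lemma qq_sub_inv_ne_zero : qq - qq⁻¹ ≠ 0 := by
  intro h
  apply qq_pow_ne_one (m := 2) (by norm_num)
  have h1 : qq = qq⁻¹ := sub_eq_zero.mp h
  calc qq ^ 2 = qq * qq := sq qq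
    _ = qq * qq⁻¹ := by rw [← h1]
    _ = 1 := mul_inv_cancel₀ qq_ne_zero

lemma qNum_mul (m : ℕ) : qNum m * (qq - qq⁻¹) = qq ^ m - (qq⁻¹) ^ m := by
  have hq := qq_ne_zero
  rw [qNum, Finset.sum_mul]
  have h : ∀ i ∈ Finset.range m, qq ^ ((m : ℤ) - 1 - 2 * (i : ℤ)) * (qq - qq⁻¹)
      = qq ^ ((m : ℤ) - 2 * (i : ℤ)) - qq ^ ((m : ℤ) - 2 * ((i + 1 : ℕ) : ℤ)) := by
    intro i _
    rw [mul_sub, ← zpow_add_one₀ hq, ← zpow_sub_one₀ hq]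
    congr 2 <;> push_cast <;> ring
  rw [Finset.sum_congr rfl h,
    Finset.sum_range_sub' (fun i : ℕ => qq ^ ((m : ℤ) - 2 * (i : ℤ)))]
  have e : (m : ℤ) - 2 * (m : ℤ) = -(m : ℤ) := by ring
  simp [e]

lemma qNum_eq (m : ℕ) : qNum m = (qq ^ m - (qq⁻¹) ^ m) / (qq - qq⁻¹) := by
  rw [eq_div_iff qq_sub_inv_ne_zero, qNum_mul]

lemma qNum_zero : qNum 0 = 0 := by simp [qNum]

lemma qNum_succ_ne_zero (m : ℕ) : qNum (m + 1) ≠ 0 := by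
  intro h
  have h1 := qNum_mul (m + 1)
  rw [h, zero_mul] at h1
  apply qq_pow_ne_one (m := (m + 1) + (m + 1)) (by omega)
  rw [pow_add]
  nth_rewrite 2 [sub_eq_zero.mp h1.symm]
  rw [← mul_pow, mul_inv_cancel₀ qq_ne_zero, one_pow]

lemma qNum_rec (m : ℕ) : qNum 2 * qNum (m + 1) = qNum m + qNum (m + 2) := by
  have hd := qq_sub_inv_ne_zero
  have hr : qq * qq⁻¹ = 1 := mul_inv_cancel₀ qq_ne_zero
  simp only [qNum_eq]
  generalize qq⁻¹ = r at *
  field_simp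
  simp only [pow_succ, pow_zero, one_mul]
  linear_combination (qq ^ m - r ^ m) * (qq - r) * hr

lemma qNum_det (a c : ℕ) :
    qNum (a + 1) * qNum (c + 1) - qNum a * qNum c = qNum (a + c + 1) := by
  have hd := qq_sub_inv_ne_zero
  have hr : qq * qq⁻¹ = 1 := mul_inv_cancel₀ qq_ne_zero
  simp only [qNum_eq]
  generalize qq⁻¹ = r at *
  field_simp
  simp only [pow_succ, pow_add]
  linear_combination (qq ^ a * qq ^ c + r ^ a * r ^ c - qq ^ a * r ^ c - r ^ a * qq ^ c) * hr

/-- `[N]_q` times the claimed inverse of the type `A_{N-1}` matrix, in 1-based indices; the values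
at index `0` and `N` are zero. -/
noncomputable def green (N a b : ℕ) : RatFunc ℚ := qNum (min a b) * qNum (N - max a b)

lemma green_zero (N b : ℕ) : green N 0 b = 0 := by simp [green, qNum_zero]

lemma green_top (N b : ℕ) : green N N b = 0 := by
  simp [green, qNum_zero]

/-- The discrete Green's function equation for the `q`-Cartan matrix. -/
lemma cartan_mul_green (n i j : ℕ) (hi : i < n) (hj : j < n) :
    qNum 2 * green (n + 1) (i + 1) (j + 1) - green (n + 1) i (j + 1)
      - green (n + 1) (i + 2) (j + 1) = if i = j then qNum (n + 1) else 0 := by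
  unfold green
  rcases lt_trichotomy i j with h | h | h
  · rw [if_neg h.ne, min_eq_left (by omega), min_eq_left (by omega), min_eq_left (by omega),
      max_eq_right (by omega), max_eq_right (by omega), max_eq_right (by omega)]
    linear_combination qNum (n + 1 - (j + 1)) * qNum_rec i
  · subst h
    obtain ⟨c, rfl⟩ : ∃ c, n = i + 1 + c := ⟨n - (i + 1), by omega⟩
    rw [if_pos rfl, min_self, max_self, min_eq_left (by omega), min_eq_right (by omega),
      max_eq_right (by omega), max_eq_left (by omega),
      show i + 1 + c + 1 - (i + 1) = c + 1 by omega, show i + 1 + c + 1 - (i + 2) = c by omega]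
    have h := qNum_det (i + 1) c
    linear_combination qNum (c + 1) * qNum_rec i + h
  · obtain ⟨c, rfl⟩ : ∃ c, n = i + 1 + c := ⟨n - (i + 1), by omega⟩
    rw [if_neg h.ne', min_eq_right (by omega), min_eq_right (by omega), min_eq_right (by omega),
      max_eq_left (by omega), max_eq_left (by omega), max_eq_left (by omega),
      show i + 1 + c + 1 - (i + 1) = c + 1 by omega, show i + 1 + c + 1 - (i + 2) = c by omega,
      show i + 1 + c + 1 - i = c + 2 by omega]
    linear_combination qNum (j + 1) * qNum_rec c

/-- Vanishing of `f` at `0` and `n + 1` makes the first and last rows of the tridiagonal matrix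
behave like the interior ones. -/
lemma sum_tridiag (n : ℕ) (x : RatFunc ℚ) (f : ℕ → RatFunc ℚ) (h0 : f 0 = 0)
    (hN : f (n + 1) = 0) (i : Fin n) :
    ∑ k : Fin n, (if i = k then x
      else if i.val + 1 = k.val ∨ k.val + 1 = i.val then -1 else 0) * f (k.val + 1)
      = x * f (i.val + 1) - f i.val - f (i.val + 2) := by
  obtain ⟨i, hi⟩ := i
  have h : ∀ k : Fin n, (if (⟨i, hi⟩ : Fin n) = k then x
      else if i + 1 = k.val ∨ k.val + 1 = i then -1 else 0) * f (k.val + 1)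
      = (if i = k.val then x * f (k.val + 1) else 0)
        - (if i = k.val + 1 then f (k.val + 1) else 0)
        - (if i + 1 = k.val then f (k.val + 1) else 0) := by
    intro k
    simp only [Fin.ext_iff]
    split_ifs <;> first | omega | ring
  have s2 : ∑ k ∈ Finset.range n, (if i = k + 1 then f (k + 1) else 0) = f i := by
    cases i with
    | zero => simp [h0]
    | succ i =>
      simp only [Nat.add_right_cancel_iff]
      rw [Finset.sum_ite_eq, if_pos (Finset.mem_range.mpr (by omega))]
  have s3 : ∑ k ∈ Finset.range n, (if i + 1 = k then f (k + 1) else 0) = f (i + 2) := by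
    rw [Finset.sum_ite_eq]
    split_ifs with h
    · rfl
    · rw [show i + 2 = n + 1 by rw [Finset.mem_range] at h; omega, hN]
  simp only [h]
  rw [Fin.sum_univ_eq_sum_range (fun k : ℕ => (if i = k then x * f (k + 1) else 0)
        - (if i = k + 1 then f (k + 1) else 0) - (if i + 1 = k then f (k + 1) else 0)),
    Finset.sum_sub_distrib, Finset.sum_sub_distrib, s2, s3, Finset.sum_ite_eq,
    if_pos (Finset.mem_range.mpr hi)]

lemma isNatLaurent_zero : IsNatLaurent 0 := ⟨0, by simp⟩

lemma isNatLaurent_add {f g : RatFunc ℚ} (hf : IsNatLaurent f) (hg : IsNatLaurent g) :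
    IsNatLaurent (f + g) := by
  obtain ⟨c, rfl⟩ := hf
  obtain ⟨d, rfl⟩ := hg
  refine ⟨c + d, (Finsupp.sum_add_index' ?_ ?_).symm⟩
  · simp
  · intro k a b
    push_cast
    ring

lemma isNatLaurent_zpow (k : ℤ) : IsNatLaurent (qq ^ k) :=
  ⟨Finsupp.single k 1, by rw [Finsupp.sum_single_index] <;> simp⟩

lemma isNatLaurent_sum (s : Finset ℕ) (f : ℕ → RatFunc ℚ) (h : ∀ i, IsNatLaurent (f i)) :
    IsNatLaurent (∑ i ∈ s, f i) :=
  Finset.sum_induction f IsNatLaurent (fun _ _ => isNatLaurent_add) isNatLaurent_zero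
    (fun i _ => h i)

lemma isNatLaurent_qNum_mul (a b : ℕ) : IsNatLaurent (qNum a * qNum b) := by
  unfold qNum
  rw [Finset.sum_mul_sum]
  refine isNatLaurent_sum _ _ fun i => isNatLaurent_sum _ _ fun j => ?_
  rw [← zpow_add₀ qq_ne_zero]
  exact isNatLaurent_zpow _

/-- The symmetrized `q`-Cartan matrix of type `A_n` is invertible, its inverse has entries
`(B(q)⁻¹)_{ij} = [min(i,j)]_q [n+1−max(i,j)]_q / [n+1]_q`, and all entries of
`[n+1]_q · B(q)⁻¹` lie in `ℕ[q,q⁻¹]`. -/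
theorem typeA_qCartan_inverse (n : ℕ) (hn : 1 ≤ n)
    (B : Matrix (Fin n) (Fin n) (RatFunc ℚ))
    (hB : ∀ i j : Fin n, B i j =
      if i = j then qNum 2
      else if i.val + 1 = j.val ∨ j.val + 1 = i.val then -1 else 0) :
    IsUnit B ∧
      (∀ i j : Fin n, B⁻¹ i j =
        qNum (min (i.val + 1) (j.val + 1)) *
          qNum (n + 1 - max (i.val + 1) (j.val + 1)) / qNum (n + 1)) ∧
      (∀ i j : Fin n, IsNatLaurent (qNum (n + 1) * B⁻¹ i j)) := by
  have hN := qNum_succ_ne_zero n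
  have hmul : B * Matrix.of (fun i j : Fin n =>
      green (n + 1) (i.val + 1) (j.val + 1) / qNum (n + 1)) = 1 := by
    ext i j
    rw [Matrix.mul_apply, Matrix.one_apply]
    simp only [hB, Matrix.of_apply, ← mul_div_assoc]
    rw [← Finset.sum_div, sum_tridiag n (qNum 2) (fun a => green (n + 1) a (j.val + 1))
      (green_zero _ _) (green_top _ _) i, cartan_mul_green n i j i.2 j.2]
    simp only [Fin.ext_iff]
    split_ifs
    · exact div_self hN
    · exact zero_div _
  have hinv : ∀ i j : Fin n, B⁻¹ i j =
      qNum (min (i.val + 1) (j.val + 1)) *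
        qNum (n + 1 - max (i.val + 1) (j.val + 1)) / qNum (n + 1) := by
    intro i j
    rw [Matrix.inv_eq_right_inv hmul]
    rfl
  refine ⟨IsUnit.of_mul_eq_one _ hmul, hinv, fun i j => ?_⟩
  rw [hinv, mul_div_cancel₀ _ hN]
  exact isNatLaurent_qNum_mul _ _
end

section
/- Let B(q) be the 4×4 matrix over ℚ(q) with rows ( [2]_q, −1, 0, 0 ), ( −1, [2]_q, −[2]_q, 0 ), ( 0, −[2]_q, [4]_q, −[2]_q ), ( 0, 0, −[2]_q, [4]_q ) (the symmetrized q-Cartan matrix of type F_4 in the paper's conventions). Set w_1 = (⟨3⟩_q/⟨9⟩_q)·( ⟨5⟩_q e_1 + [3]_{q²} e_2 + ⟨2⟩_q e_3 + e_4 ), w_2 = (⟨3⟩_q/⟨9⟩_q)·( [3]_{q²} e_1 + [6]_q e_2 + [4]_q e_3 + [2]_q e_4 ), w_3 = ⟨9⟩_q^{−1}·( ⟨2⟩_q⟨3⟩_q e_1 + [4]_q⟨3⟩_q e_2 + [3]_{q²}⟨2⟩_q e_3 + [3]_{q²} e_4 ), and w_4 = ⟨9⟩_q^{−1}·( ⟨3⟩_q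 e_1 + [2]_q⟨3⟩_q e_2 + [3]_{q²} e_3 + (⟨3⟩_q⟨4⟩_q/[2]_q) e_4 ). Then B(q) · w_i = e_i for i = 1,2,3,4 (so w_i is the i-th column of B(q)^{−1}), and moreover every coordinate of [18]_q · w_i lies in ℕ[q,q^{−1}]. -/
/-!
The numbers `[2]_q` and `⟨9⟩_q` are nonzero, and two quotients in the statement are Laurent
polynomials: `[3]_{q²} = q⁴ + 1 + q⁻⁴` and `⟨3⟩_q / [2]_q = q² - 1 + q⁻²`. Hence each coordinate
of each `w i` is a Laurent polynomial divided by `⟨9⟩_q`, and `B(q) ⬝ w i = e_i` becomes, after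
multiplication by `⟨9⟩_q`, an identity of Laurent polynomials.

For positivity, `[18]_q = [9]_q ⟨9⟩_q`, so `[18]_q · w i` is `[9]_q` times the numerators. All
numerators but the last coordinate of `w 3` are visibly products of elements of `ℕ[q,q⁻¹]`, which
is closed under sums and products. The exceptional one is settled by
`[9]_q (q² - 1 + q⁻²) = [7]_q + ⟨10⟩_q`.
-/

set_option synthInstance.maxHeartbeats 1000000

lemma qq_pow_add_one_ne_zero {n : ℕ} (hn : 0 < n) : qq ^ n + 1 ≠ 0 := by
  have h := Polynomial.X_pow_add_C_ne_zero hn (1 : ℚ)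
  rw [← (RatFunc.algebraMap_injective ℚ).ne_iff] at h
  simpa [qq] using h

lemma qWh_eq (m : ℕ) : qWh m = qq ^ m + (qq ^ m)⁻¹ := by
  simp [qWh]

lemma qWh_ne_zero {m : ℕ} (hm : 0 < m) : qWh m ≠ 0 := by
  have h := qq_pow_add_one_ne_zero (n := 2 * m) (by omega)
  have hq : qq ^ m ≠ 0 := pow_ne_zero _ qq_ne_zero
  intro h0
  apply h
  rw [qWh_eq] at h0
  have : qq ^ (2 * m) + 1 = qq ^ m * (qq ^ m + (qq ^ m)⁻¹) := by
    rw [mul_add, mul_inv_cancel₀ hq]; ring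
  rw [this, h0, mul_zero]

lemma qNum_two : qNum 2 = qWh 1 := by
  simp [qNum, qWh, Finset.sum_range_succ]

lemma qNum_two_ne_zero : qNum 2 ≠ 0 := qNum_two ▸ qWh_ne_zero one_pos

lemma qNum_four : qNum 4 = qWh 3 + qWh 1 := by
  simp only [qNum, qWh, Finset.sum_range_succ, Finset.sum_range_zero]
  norm_num
  ring

lemma qNum_six : qNum 6 = qWh 5 + qWh 3 + qWh 1 := by
  simp only [qNum, qWh, Finset.sum_range_succ, Finset.sum_range_zero]
  norm_num
  ring

lemma qNum2_three : qNum2 3 = qWh 4 + 1 := by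
  have hq := qq_ne_zero
  rw [qNum2, div_eq_iff qNum_two_ne_zero, qNum_six, qNum_two]
  simp only [qWh_eq]
  field_simp
  ring

lemma qWh_three : qWh 3 = (qWh 2 - 1) * qNum 2 := by
  have hq := qq_ne_zero
  rw [qNum_two]
  simp only [qWh_eq]
  field_simp
  ring

lemma qNum_eighteen : qNum 18 = qNum 9 * qWh 9 := by
  have h (a b : ℤ) : qq ^ (a + b) = qq ^ a * qq ^ b := zpow_add₀ qq_ne_zero a b
  rw [qNum, show (18 : ℕ) = 9 + 9 from rfl, Finset.sum_range_add, qWh, mul_add, qNum,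
    Finset.sum_mul, Finset.sum_mul]
  congr 1 <;> refine Finset.sum_congr rfl fun i _ => ?_ <;> rw [← h] <;> congr 1 <;>
    push_cast <;> ring

/-- The identity behind the positivity of the one numerator that involves a subtraction. -/
lemma qNum_nine_mul : qNum 9 * (qWh 2 - 1) = qNum 7 + qWh 10 := by
  have hq := qq_ne_zero
  simp only [qNum, qWh, Finset.sum_range_succ, Finset.sum_range_zero]
  norm_num
  field_simp
  ring

namespace IsNatLaurent

lemma zero : IsNatLaurent 0 := ⟨0, by simp⟩

lemma monomial (n : ℕ) (k : ℤ) : IsNatLaurent ((n : RatFunc ℚ) * qq ^ k) :=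
  ⟨Finsupp.single k n, by rw [Finsupp.sum_single_index]; simp⟩

lemma zpow (k : ℤ) : IsNatLaurent (qq ^ k) := by
  simpa using monomial 1 k

lemma one : IsNatLaurent 1 := by
  simpa using zpow 0

lemma add {f g : RatFunc ℚ} (hf : IsNatLaurent f) (hg : IsNatLaurent g) :
    IsNatLaurent (f + g) := by
  obtain ⟨c, rfl⟩ := hf
  obtain ⟨d, rfl⟩ := hg
  refine ⟨c + d, ?_⟩
  rw [Finsupp.sum_add_index']
  · simp
  · intro k m n
    push_cast
    ring

lemma sum {ι : Type*} (s : Finset ι) (f : ι → RatFunc ℚ) (h : ∀ i ∈ s, IsNatLaurent (f i)) :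
    IsNatLaurent (∑ i ∈ s, f i) :=
  Finset.sum_induction f IsNatLaurent (fun _ _ => add) zero h

lemma mul {f g : RatFunc ℚ} (hf : IsNatLaurent f) (hg : IsNatLaurent g) :
    IsNatLaurent (f * g) := by
  obtain ⟨c, rfl⟩ := hf
  obtain ⟨d, rfl⟩ := hg
  rw [Finsupp.sum, Finsupp.sum, Finset.sum_mul_sum]
  refine sum _ _ fun k _ => sum _ _ fun l _ => ?_
  have h := monomial (c k * d l) (k + l)
  rwa [zpow_add₀ qq_ne_zero, Nat.cast_mul, mul_mul_mul_comm] at h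

lemma num (m : ℕ) : IsNatLaurent (qNum m) := sum _ _ fun _ _ => zpow _

lemma wh (m : ℕ) : IsNatLaurent (qWh m) := (zpow _).add (zpow _)

lemma num2_three : IsNatLaurent (qNum2 3) := qNum2_three ▸ (wh 4).add one

end IsNatLaurent

/-- Multiplication by `[18]_q` clears the denominator `⟨9⟩_q`. -/
lemma qNum_eighteen_mul (f : RatFunc ℚ) : qNum 18 * ((qWh 9)⁻¹ * f) = qNum 9 * f := by
  rw [qNum_eighteen, mul_assoc, mul_inv_cancel_left₀ (qWh_ne_zero (by norm_num))]

lemma qWh_three_mul_div : qWh 3 * qWh 4 / qNum 2 = (qWh 2 - 1) * qWh 4 := by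
  rw [div_eq_iff qNum_two_ne_zero, qWh_three]
  ring

/-- For the symmetrized `q`-Cartan matrix `B(q)` of type `F_4`, the explicit vectors `w i`
satisfy `B(q) ⬝ w i = e_i` (so `w i` is the `i`-th column of `B(q)⁻¹`), and every
coordinate of `[18]_q · w i` lies in `ℕ[q,q⁻¹]`. -/
theorem typeF4_qCartan_coweights
    (B : Matrix (Fin 4) (Fin 4) (RatFunc ℚ))
    (hB : B = !![qNum 2, -1, 0, 0;
                 -1, qNum 2, -qNum 2, 0;
                 0, -qNum 2, qNum 4, -qNum 2;
                 0, 0, -qNum 2, qNum 4])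
    (w : Fin 4 → Fin 4 → RatFunc ℚ)
    (hw : w = ![(qWh 3 / qWh 9) • ![qWh 5, qNum2 3, qWh 2, 1],
                (qWh 3 / qWh 9) • ![qNum2 3, qNum 6, qNum 4, qNum 2],
                (qWh 9)⁻¹ • ![qWh 2 * qWh 3, qNum 4 * qWh 3, qNum2 3 * qWh 2, qNum2 3],
                (qWh 9)⁻¹ • ![qWh 3, qNum 2 * qWh 3, qNum2 3, qWh 3 * qWh 4 / qNum 2]]) :
    (∀ i : Fin 4, B.mulVec (w i) = Pi.single i 1) ∧
      (∀ i j : Fin 4, IsNatLaurent (qNum 18 * w i j)) := by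
  have h9 : qWh 9 ≠ 0 := qWh_ne_zero (by norm_num)
  have hq := qq_ne_zero
  rw [qWh_three_mul_div, div_eq_inv_mul, ← smul_smul, ← smul_smul] at hw
  subst hB hw
  refine ⟨fun i => ?_, fun i j => ?_⟩
  · -- Pull `⟨9⟩⁻¹` out of the product, so that only Laurent polynomial identities remain.
    fin_cases i <;>
      simp only [Fin.zero_eta, Fin.mk_one, Fin.reduceFinMk, Matrix.cons_val, Matrix.mulVec_smul,
        Fin.isValue] <;>
      rw [inv_smul_eq_iff₀ h9] <;> ext j <;> fin_cases j <;>
      simp [Matrix.mulVec, dotProduct, Fin.sum_univ_four, qNum2_three, qNum_six, qNum_four,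
        qNum_two, qWh_eq, -mul_eq_zero] <;>
      field_simp <;> ring
  · have key : qNum 9 * ((qWh 2 - 1) * qWh 4) = (qNum 7 + qWh 10) * qWh 4 := by
      rw [← mul_assoc, qNum_nine_mul]
    open IsNatLaurent in
    fin_cases i <;> fin_cases j <;>
      simp only [Fin.zero_eta, Fin.mk_one, Fin.reduceFinMk, Matrix.cons_val, Pi.smul_apply,
        smul_eq_mul, qNum_eighteen_mul, key, Fin.isValue] <;>
      repeat' first
        | exact num _ | exact wh _ | exact num2_three | exact one
        | apply IsNatLaurent.mul | apply IsNatLaurent.add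
end

section
/- Let b ∈ ℂ, let ξ be an invertible rational End(V)-valued function with ξ(∞) = 1 and commuting values, and let x be a rational End(V)-valued function, such that the identity (u − v − b)·ξ(u)x(v) = (u − v + b)·x(v)ξ(u) − 2b·x(u−b)ξ(u) holds for all u, v away from the poles. Then the following identity of rational functions in (u,v) holds: [ξ(u)^{−1}ξ′(u), x(v)] = ( 1/(u−v+b) − 1/(u−v−b) )·x(v) + x(u−b)/(u−v−b) − x(u+b)/(u−v+b), where [A,B] = AB − BA and ξ′ denotes the derivative of ξ. -/
/-!
Write `X = x(v)`, `Y = x(u-b)`, `Z = x(u+b)`, `D = x'(u-b)`, `A = ξ(u)`, `A' = ξ'(u)` and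
`s = u - v`. The defining relation gives four identities between these matrices:

* itself, `(s-b) A X = (s+b) X A - 2b Y A`;
* its derivative in `u`, `A X + (s-b) A' X = X A + (s+b) X A' - 2b (D A + Y A')`;
* its derivative in `v` at `v = u - b`, where the coefficient of `ξ(u) x(v)` vanishes:
  `A Y = Y A - 2b D A`;
* its value at `v = u + b`, where the coefficient of `x(v) ξ(u)` vanishes: `A Z = Y A`
  (for `b = 0` this is the previous identity).

Since `A` is invertible, the claim may be multiplied by `A` on the left, and it is then a linear
combination of these four (`commutator_algebra`).
-/

open Filter

/-- Evaluation of a matrix of rational functions at a point `z ∈ ℂ`. -/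
noncomputable def mEval {n : Type*} (F : Matrix n n (RatFunc ℂ)) (z : ℂ) :
    Matrix n n ℂ :=
  Matrix.of fun i j => RatFunc.eval (RingHom.id ℂ) z (F i j)

/-- The (finite) set of poles of the entries of a matrix of rational functions. -/
def mPoles {n : Type*} (F : Matrix n n (RatFunc ℂ)) : Set ℂ :=
  {z | ∃ i j, ((F i j).denom.eval z = 0)}

/-- The derivative of a matrix of rational functions at `u`, computed entrywise. -/
noncomputable def mDeriv {n : Type*} (F : Matrix n n (RatFunc ℂ)) (u : ℂ) :
    Matrix n n ℂ :=
  Matrix.of fun i j => deriv (fun z => mEval F z i j) u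

/-- Entrywise derivative of a matrix-valued function. This avoids choosing a norm on matrices. -/
def HasMatDerivAt {n : Type*} (F : ℂ → Matrix n n ℂ) (F' : Matrix n n ℂ) (u : ℂ) : Prop :=
  ∀ i j, HasDerivAt (fun z => F z i j) (F' i j) u

namespace HasMatDerivAt

variable {n : Type*} {F G : ℂ → Matrix n n ℂ} {F' G' : Matrix n n ℂ} {u : ℂ}

theorem const (C : Matrix n n ℂ) (u : ℂ) : HasMatDerivAt (fun _ => C) 0 u :=
  fun i j => hasDerivAt_const u (C i j)

theorem sub (hF : HasMatDerivAt F F' u) (hG : HasMatDerivAt G G' u) :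
    HasMatDerivAt (fun z => F z - G z) (F' - G') u :=
  fun i j => (hF i j).sub (hG i j)

theorem mul [Fintype n] (hF : HasMatDerivAt F F' u) (hG : HasMatDerivAt G G' u) :
    HasMatDerivAt (fun z => F z * G z) (F' * G u + F u * G') u := by
  intro i j
  simp only [Matrix.mul_apply, Matrix.add_apply, ← Finset.sum_add_distrib]
  exact HasDerivAt.fun_sum fun k _ => (hF i k).mul (hG k j)

theorem _root_.HasDerivAt.smul_hasMatDerivAt {f : ℂ → ℂ} {f' : ℂ} (hf : HasDerivAt f f' u) (hF : HasMatDerivAt F F' u) :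
    HasMatDerivAt (fun z => f z • F z) (f' • F u + f u • F') u := by
  intro i j
  exact hf.mul (hF i j)

theorem comp_sub_const {b : ℂ} (hF : HasMatDerivAt F F' (u - b)) :
    HasMatDerivAt (fun z => F (z - b)) F' u :=
  fun i j => (hF i j).comp_sub_const u b

theorem unique_of_eventuallyEq (hF : HasMatDerivAt F F' u) (hG : HasMatDerivAt G G' u)
    (h : ∀ᶠ z in nhds u, F z = G z) : F' = G' := by
  ext i j
  refine (hF i j).unique ((hG i j).congr_of_eventuallyEq ?_)
  filter_upwards [h] with z hz
  rw [hz]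

end HasMatDerivAt

theorem eventually_notMem_mPoles {n : Type*} [Finite n] {F : Matrix n n (RatFunc ℂ)} {u : ℂ}
    (hu : u ∉ mPoles F) : ∀ᶠ z in nhds u, z ∉ mPoles F := by
  simp only [mPoles, Set.mem_ofPred_eq, not_exists] at hu ⊢
  simp only [eventually_all]
  intro i j
  exact (F i j).denom.continuous.continuousAt.eventually_ne (hu i j)

theorem hasMatDerivAt_mEval {n : Type*} {F : Matrix n n (RatFunc ℂ)} {u : ℂ}
    (hu : u ∉ mPoles F) : HasMatDerivAt (mEval F) (mDeriv F u) u := by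
  simp only [mPoles, Set.mem_ofPred_eq, not_exists] at hu
  intro i j
  have h : DifferentiableAt ℂ (fun z => mEval F z i j) u := by
    simp only [mEval, Matrix.of_apply, RatFunc.eval]
    exact (F i j).num.differentiable.differentiableAt.div
      (F i j).denom.differentiable.differentiableAt (hu i j)
  exact h.hasDerivAt

/-- `RatFunc.eval` is only additive on functions without a pole at the point, so the regularity of
the sum is carried along in the induction. -/
theorem ratFunc_eval_sum {ι : Type*} (s : Finset ι) (f : ι → RatFunc ℂ) (z : ℂ)
    (hf : ∀ i, (f i).denom.eval z ≠ 0) :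
    (∑ i ∈ s, f i).denom.eval z ≠ 0 ∧
      RatFunc.eval (RingHom.id ℂ) z (∑ i ∈ s, f i) =
        ∑ i ∈ s, RatFunc.eval (RingHom.id ℂ) z (f i) := by
  classical
  induction s using Finset.induction_on with
  | empty => simp
  | insert a s ha ih =>
    rw [Finset.sum_insert ha, Finset.sum_insert ha]
    constructor
    · intro h
      have := Polynomial.eval_eq_zero_of_dvd_of_eval_eq_zero
        (RatFunc.denom_add_dvd (f a) (∑ i ∈ s, f i)) h
      rw [Polynomial.eval_mul] at this
      exact mul_ne_zero (hf a) ih.1 this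
    · rw [RatFunc.eval_add (RingHom.id ℂ) z (hf a) ih.1, ih.2]

theorem mEval_mul {n : Type*} [Fintype n] {F G : Matrix n n (RatFunc ℂ)} {u : ℂ}
    (hF : u ∉ mPoles F) (hG : u ∉ mPoles G) : mEval (F * G) u = mEval F u * mEval G u := by
  simp only [mPoles, Set.mem_ofPred_eq, not_exists] at hF hG
  ext i j
  simp only [mEval, Matrix.of_apply, Matrix.mul_apply]
  rw [(ratFunc_eval_sum _ _ u _).2]
  · exact Finset.sum_congr rfl fun k _ => RatFunc.eval_mul (RingHom.id ℂ) u (hF i k) (hG k j)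
  · intro k h
    have := Polynomial.eval_eq_zero_of_dvd_of_eval_eq_zero
      (RatFunc.denom_mul_dvd (F i k) (G k j)) h
    rw [Polynomial.eval_mul] at this
    exact mul_ne_zero (hF i k) (hG k j) this

theorem mEval_one {n : Type*} [DecidableEq n] (u : ℂ) :
    mEval (1 : Matrix n n (RatFunc ℂ)) u = 1 := by
  ext i j
  by_cases h : i = j <;> simp [mEval, Matrix.one_apply, h]

/-- The linear algebra of the proof, with `B` the inverse of `A = ξ(u)`; the hypotheses are the
four identities between `A = ξ(u)`, `A' = ξ'(u)`, `X = x(v)`, `Y = x(u-b)`, `Z = x(u+b)` and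
`D = x'(u-b)`, where `s = u - v`. -/
theorem commutator_algebra {R : Type*} [Ring R] [Algebra ℂ R] {s b : ℂ}
    {A B A' X Y Z D : R} (hAB : A * B = 1) (hBA : B * A = 1)
    (hp : s + b ≠ 0) (hm : s - b ≠ 0)
    (h0 : (s - b) • (A * X) = (s + b) • (X * A) - (2 * b) • (Y * A))
    (h1 : A * X + (s - b) • (A' * X) =
      X * A + (s + b) • (X * A') - (2 * b) • (D * A + Y * A'))
    (h2 : A * Y = Y * A - (2 * b) • (D * A))
    (h3 : A * Z = Y * A) :
    B * A' * X - X * (B * A') =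
      ((s + b)⁻¹ - (s - b)⁻¹) • X + (s - b)⁻¹ • Y - (s + b)⁻¹ • Z := by
  -- Conjugating by `A`: `A X A⁻¹ A'` is expressed through `X A'` and `Y A'`.
  have hconj : (s - b) • (A * X * (B * A')) = (s + b) • (X * A') - (2 * b) • (Y * A') := by
    have h := congrArg (· * (B * A')) h0
    simp only [sub_mul, smul_mul_assoc] at h
    rwa [mul_assoc X A, mul_assoc Y A, ← mul_assoc A B A', hAB, one_mul] at h
  have hcancel : ∀ P Q : R, ((s + b) * (s - b)) • (A * P) = ((s + b) * (s - b)) • (A * Q) →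
      P = Q := by
    intro P Q h
    have h' := congrArg (B * ·) (smul_right_injective R (mul_ne_zero hp hm) h)
    simpa only [← mul_assoc, hBA, one_mul] using h'
  apply hcancel
  have hL : ((s + b) * (s - b)) • (A * (B * A' * X - X * (B * A'))) =
      (s + b) • ((s - b) • (A' * X) - (s - b) • (A * X * (B * A'))) := by
    rw [mul_sub A, ← mul_assoc A (B * A') X, ← mul_assoc A B A', hAB, one_mul, ← mul_assoc A X,
      mul_smul, smul_sub]
  have hR : ((s + b) * (s - b)) • (A * (((s + b)⁻¹ - (s - b)⁻¹) • X + (s - b)⁻¹ • Y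
      - (s + b)⁻¹ • Z)) = (-(2 * b)) • (A * X) + (s + b) • (A * Y) - (s - b) • (A * Z) := by
    simp only [mul_sub, mul_add, mul_smul_comm, smul_sub, smul_add, smul_smul]
    congr 3
    · field_simp
      ring
    · field_simp
    · field_simp
  rw [hL, hR, hconj, h3]
  linear_combination (norm := module) (s + b) • h1 - (s + b) • h2 - h0

/-- **Equation (eq: imp-lem) in the proof of Lemma 3.3.** If
`(u − v − b) ξ(u) x(v) = (u − v + b) x(v) ξ(u) − 2b x(u−b) ξ(u)`, `ξ` is an invertible
rational matrix-valued function with `ξ(∞) = 1` and commuting values, then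
`[ξ(u)⁻¹ξ′(u), x(v)] = (1/(u−v+b) − 1/(u−v−b)) x(v) + x(u−b)/(u−v−b) − x(u+b)/(u−v+b)`
away from the poles. -/
theorem log_derivative_commutator_identity (d : ℕ) (b : ℂ)
    (ξ x : Matrix (Fin d) (Fin d) (RatFunc ℂ))
    (hdet : ξ.det ≠ 0)
    (hinf : ∀ i j, Tendsto (fun z => mEval ξ z i j) (Bornology.cobounded ℂ)
      (nhds ((1 : Matrix (Fin d) (Fin d) ℂ) i j)))
    (hcomm : ∀ u v : ℂ, u ∉ mPoles ξ → v ∉ mPoles ξ →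
      mEval ξ u * mEval ξ v = mEval ξ v * mEval ξ u)
    (hrel : ∀ u v : ℂ, u ∉ mPoles ξ → v ∉ mPoles x → u - b ∉ mPoles x →
      (u - v - b) • (mEval ξ u * mEval x v) =
        (u - v + b) • (mEval x v * mEval ξ u) -
          (2 * b) • (mEval x (u - b) * mEval ξ u)) :
    ∀ u v : ℂ, u ∉ mPoles ξ → u ∉ mPoles ξ⁻¹ → v ∉ mPoles x →
      u - b ∉ mPoles x → u + b ∉ mPoles x →
      u - v + b ≠ 0 → u - v - b ≠ 0 →
      (mEval ξ u)⁻¹ * mDeriv ξ u * mEval x v - mEval x v * ((mEval ξ u)⁻¹ * mDeriv ξ u) =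
        ((u - v + b)⁻¹ - (u - v - b)⁻¹) • mEval x v +
          (u - v - b)⁻¹ • mEval x (u - b) - (u - v + b)⁻¹ • mEval x (u + b) := by
  intro u v hu hu' hv hum hup hp hm
  have hunit : IsUnit ξ.det := isUnit_iff_ne_zero.mpr hdet
  have hAB : mEval ξ u * mEval ξ⁻¹ u = 1 := by
    rw [← mEval_mul hu hu', Matrix.mul_nonsing_inv _ hunit, mEval_one]
  have hinv : (mEval ξ u)⁻¹ = mEval ξ⁻¹ u := Matrix.inv_eq_right_inv hAB
  have hξ := hasMatDerivAt_mEval hu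
  have hx := hasMatDerivAt_mEval hum
  -- Differentiating the relation in `u`.
  have h1 : mEval ξ u * mEval x v + (u - v - b) • (mDeriv ξ u * mEval x v) =
      mEval x v * mEval ξ u + (u - v + b) • (mEval x v * mDeriv ξ u) -
        (2 * b) • (mDeriv x (u - b) * mEval ξ u + mEval x (u - b) * mDeriv ξ u) := by
    have hcont : Tendsto (fun z : ℂ => z - b) (nhds u) (nhds (u - b)) :=
      (continuous_id.sub continuous_const).tendsto u
    have key := HasMatDerivAt.unique_of_eventuallyEq
      (((((hasDerivAt_id u).sub_const v).sub_const b)).smul_hasMatDerivAt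
        (hξ.mul (.const (mEval x v) u)))
      (((((hasDerivAt_id u).sub_const v).add_const b).smul_hasMatDerivAt
        ((HasMatDerivAt.const (mEval x v) u).mul hξ)).sub
        ((hasDerivAt_const u (2 * b)).smul_hasMatDerivAt (hx.comp_sub_const.mul hξ)))
      (by
        filter_upwards [eventually_notMem_mPoles hu,
          hcont.eventually (eventually_notMem_mPoles hum)] with z hz hz'
        exact hrel z v hz hv hz')
    simpa using key
  -- Differentiating the relation in `v` at `v = u - b`.
  have h2 : mEval ξ u * mEval x (u - b) =
      mEval x (u - b) * mEval ξ u - (2 * b) • (mDeriv x (u - b) * mEval ξ u) := by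
    have key := HasMatDerivAt.unique_of_eventuallyEq
      ((((hasDerivAt_id (u - b)).const_sub u).sub_const b).smul_hasMatDerivAt
        ((HasMatDerivAt.const (mEval ξ u) (u - b)).mul hx))
      (((((hasDerivAt_id (u - b)).const_sub u).add_const b).smul_hasMatDerivAt
        (hx.mul (.const (mEval ξ u) (u - b)))).sub
        (.const ((2 * b) • (mEval x (u - b) * mEval ξ u)) (u - b)))
      (by
        filter_upwards [eventually_notMem_mPoles hum] with z hz
        exact hrel u z hu hz hum)
    simp at key
    rw [← neg_inj, key, two_mul]
    abel
  -- At `v = u + b` the coefficient `u - v + b` vanishes and `u - v - b = -2b`.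
  have h3 : mEval ξ u * mEval x (u + b) = mEval x (u - b) * mEval ξ u := by
    rcases eq_or_ne b 0 with rfl | hb
    · simpa using h2
    · have h := hrel u (u + b) hu hup hum
      rw [show u - (u + b) - b = -(2 * b) by ring, show u - (u + b) + b = 0 by ring, zero_smul,
        zero_sub, neg_smul, neg_inj] at h
      exact smul_right_injective _ (mul_ne_zero two_ne_zero hb) h
  rw [hinv]
  exact commutator_algebra hAB (mul_eq_one_comm.mp hAB) hp hm (hrel u v hu hv hum) h1 h2 h3
end
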